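/- Fix an integer N ≥ 1 and δ ∈ (0,1], set λ := ( log(2/δ)·β / ( 2·N·v·(β·𝔠_p + K_p·2^{p−1}) ) )^{1/p}, and define μ̂_N := (1/N)·Σ_{m=1}^N Trunc(λ·X_m)·X_m. Then with probability at least 1 − δ: ‖μ̂_N − μ‖ ≤ 2·( 2·v·(β·𝔠_p + K_p·2^{p−1}) )^{1/p}·( β·log(2/δ)/N )^{(p−1)/p}. -/

import Mathlib

open MeasureTheory
open scoped Classical

/-- `truncB x = min(1, ‖x‖)/‖x‖` for `x ≠ 0`, and `truncB 0 = 1`; so `truncB x • x` is the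
projection of `x` onto the closed unit ball. -/
noncomputable def truncB {B : Type*} [NormedAddCommGroup B] (x : B) : ℝ :=
  if x = 0 then 1 else min 1 ‖x‖ / ‖x‖

/-- `K_p = (1/p) ((p-1)/p)^{p-1}`. -/
noncomputable def Kp (p : ℝ) : ℝ := (1 / p) * ((p - 1) / p) ^ (p - 1)

/-- `𝔠_p(ρ) = 2^{p+1} (e^{2ρ} - 2ρ - 1)/(2ρ)²`. -/
noncomputable def frakC (p ρ : ℝ) : ℝ :=
  2 ^ (p + 1) * (Real.exp (2 * ρ) - 2 * ρ - 1) / (2 * ρ) ^ 2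

/-!
For a `(2, β)`-smooth norm, a perturbation `y` of bounded norm changes `cosh ‖x‖` by at most a
linear term in `y`, given by a subgradient at `x`, and a factor `1 + O(‖y‖ ^ 2)`: by convexity of
`cosh ∘ √`, `cosh ‖x + y‖` is at most what the hyperbolic law of cosines gives for a triangle with
sides `‖x‖` and `‖y‖`. Along a bounded martingale `S_n` the linear term averages out, so
`E cosh ‖S_n‖` grows at most geometrically, and Markov's inequality gives a Freedman-type tail bound
for `‖S_n‖`.

Truncation makes the increments bounded: the centered truncations of `λ X_n` have norm at most `2`
and conditional second moment at most `4 λ ^ p v`, because `‖Trunc(x) x‖ ^ 2 ≤ ‖x‖ ^ p`, while the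
bias of each truncation is at most `K_p λ ^ p v`, because `‖Trunc(x) x - x‖ ≤ K_p ‖x‖ ^ p`. The
value of `λ` balances the confidence term `β log(2/δ) / (N λ)` against the moment terms, which are
of order `λ ^ (p - 1) v`.
-/

section RealInequalities

/-- The second-order Taylor remainder of the exponential, normalized by `r ^ 2`, which governs
Bennett- and Freedman-type inequalities. At `r = 0` it has the junk value `0` instead of the
limit `1 / 2`. -/
noncomputable def expRemainder (r : ℝ) : ℝ :=
  (Real.exp r - 1 - r) / r ^ 2

theorem expRemainder_nonneg (r : ℝ) : 0 ≤ expRemainder r :=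
  div_nonneg (by linarith [Real.add_one_le_exp r]) (sq_nonneg r)

theorem hasSum_exp_sub_one_sub (t : ℝ) :
    HasSum (fun n : ℕ => t ^ (n + 2) / (n + 2).factorial) (Real.exp t - 1 - t) := by
  have hexp : HasSum (fun n : ℕ => t ^ n / n.factorial) (Real.exp t) := by
    rw [Real.exp_eq_exp_ℝ]
    exact NormedSpace.expSeries_div_hasSum_exp t
  simpa [Finset.sum_range_succ, sub_sub] using (hasSum_nat_add_iff' 2).2 hexp

theorem exp_sub_one_sub_le_expRemainder_mul_sq {r t : ℝ} (ht : 0 ≤ t) (htr : t ≤ r) :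
    Real.exp t - 1 - t ≤ expRemainder r * t ^ 2 := by
  rcases (ht.trans htr).eq_or_lt with rfl | hr
  · simp [le_antisymm htr ht]
  refine hasSum_le (fun n => ?_) (hasSum_exp_sub_one_sub t)
    (((hasSum_exp_sub_one_sub r).div_const (r ^ 2)).mul_right (t ^ 2))
  calc t ^ (n + 2) / (n + 2).factorial = t ^ n / (n + 2).factorial * t ^ 2 := by ring
    _ ≤ r ^ n / (n + 2).factorial * t ^ 2 := by gcongr
    _ = r ^ (n + 2) / (n + 2).factorial / r ^ 2 * t ^ 2 := by field_simp; ring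

theorem four_mul_expRemainder_le_frakC {p : ℝ} (hp : 1 ≤ p) (ρ : ℝ) :
    4 * expRemainder (2 * ρ) ≤ frakC p ρ := by
  have hpow : (4 : ℝ) ≤ 2 ^ (p + 1) :=
    calc (4 : ℝ) = 2 ^ (2 : ℝ) := by norm_num
      _ ≤ 2 ^ (p + 1) := Real.rpow_le_rpow_of_exponent_le (by norm_num) (by linarith)
  calc 4 * expRemainder (2 * ρ) ≤ 2 ^ (p + 1) * expRemainder (2 * ρ) :=
        mul_le_mul_of_nonneg_right hpow (expRemainder_nonneg _)
    _ = frakC p ρ := by unfold expRemainder frakC; ring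

theorem Kp_pos {p : ℝ} (hp : 1 < p) : 0 < Kp p := by
  have : 0 < p - 1 := by linarith
  unfold Kp
  positivity

-- `Kp p` is the least `K` for which this holds: equality is attained at `s = p / (p - 1)`.
theorem sub_one_le_Kp_mul_rpow {p s : ℝ} (hp : 1 < p) (hs : 0 ≤ s) : s - 1 ≤ Kp p * s ^ p := by
  have hp₁ : 0 < p - 1 := by linarith
  set q := (p - 1) / p with hq
  have hq₀ : 0 < q := by positivity
  have bernoulli : 1 + p * (s * q - 1) ≤ (s * q) ^ p := by
    simpa using one_add_mul_self_le_rpow_one_add (s := s * q - 1)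
      (by linarith [mul_nonneg hs hq₀.le]) hp.le
  refine le_of_mul_le_mul_left ?_ hp₁
  calc (p - 1) * (s - 1) = 1 + p * (s * q - 1) := by rw [hq]; field_simp; ring
    _ ≤ (s * q) ^ p := bernoulli
    _ = q ^ (p - 1) * q * s ^ p := by
        rw [Real.mul_rpow hs hq₀.le, ← Real.rpow_add_one hq₀.ne', sub_add_cancel, mul_comm]
    _ = (p - 1) * (Kp p * s ^ p) := by rw [Kp, ← hq, hq]; field_simp

theorem sinh_le_mul_cosh {s : ℝ} (hs : 0 ≤ s) : Real.sinh s ≤ s * Real.cosh s := by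
  refine hasSum_le (fun n => ?_) (Real.hasSum_sinh s) ((Real.hasSum_cosh s).mul_left s)
  rw [← mul_div_assoc, pow_succ, mul_comm s]
  gcongr
  omega

theorem cosh_add_sinh_mul_le (a b : ℝ) :
    Real.cosh a + Real.sinh a * (b - a) ≤ Real.cosh b := by
  have tangent (x y : ℝ) : Real.exp x * (y - x + 1) ≤ Real.exp y :=
    calc Real.exp x * (y - x + 1) ≤ Real.exp x * Real.exp (y - x) := by
          gcongr
          exact Real.add_one_le_exp _
      _ = Real.exp y := by rw [← Real.exp_add, add_sub_cancel]
  rw [Real.cosh_eq, Real.cosh_eq, Real.sinh_eq]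
  linarith [tangent a b, tangent (-a) (-b)]

theorem convexOn_cosh_sqrt : ConvexOn ℝ (Set.Ici 0) fun u => Real.cosh √u := by
  have series {u : ℝ} (hu : 0 ≤ u) :
      HasSum (fun n : ℕ => u ^ n / (2 * n).factorial) (Real.cosh √u) := by
    simpa only [pow_mul, Real.sq_sqrt hu] using Real.hasSum_cosh √u
  refine ⟨convex_Ici 0, fun x hx y hy a b ha hb hab => ?_⟩
  refine hasSum_le (fun n => ?_) (series (convex_Ici 0 hx hy ha hb hab))
    (((series hx).mul_left a).add ((series hy).mul_left b))
  rw [← mul_div_assoc, ← mul_div_assoc, ← add_div]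
  gcongr
  exact (convexOn_pow n).2 hx hy ha hb hab

-- A hyperbolic triangle has a longer third side than the Euclidean triangle with the same two
-- sides `s`, `t` and the same angle, because `cosh ∘ √` is convex.
theorem cosh_le_cosh_mul_cosh_add {r s t : ℝ} (hs : 0 ≤ s) (ht : 0 ≤ t) (hlo : |s - t| ≤ r)
    (hhi : r ≤ s + t) :
    Real.cosh r ≤ Real.cosh s * Real.cosh t +
      (r ^ 2 - s ^ 2 - t ^ 2) / 2 * (Real.sinh s / s * (Real.sinh t / t)) := by
  rcases hs.eq_or_lt with rfl | hs
  · have hrt : r = t := le_antisymm (by simpa using hhi) (by simpa [abs_of_nonneg ht] using hlo)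
    simp [hrt]
  rcases ht.eq_or_lt with rfl | ht
  · have hrs : r = s := le_antisymm (by simpa using hhi) (by simpa [abs_of_pos hs] using hlo)
    simp [hrs]
  have hr : 0 ≤ r := (abs_nonneg _).trans hlo
  have hlo' : (s - t) ^ 2 ≤ r ^ 2 := sq_le_sq.2 (hlo.trans (le_abs_self r))
  have hhi' : r ^ 2 ≤ (s + t) ^ 2 := by gcongr
  set w := (r ^ 2 - (s - t) ^ 2) / (4 * s * t) with hw
  have hw₀ : 0 ≤ w := div_nonneg (by linarith) (by positivity)
  have hw₁ : w ≤ 1 := (div_le_one (by positivity)).2 (by linarith)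
  have hrw : r ^ 2 = w * (s + t) ^ 2 + (1 - w) * (s - t) ^ 2 := by rw [hw]; field_simp; ring
  have chord : Real.cosh r ≤ w * Real.cosh (s + t) + (1 - w) * Real.cosh (s - t) := by
    simpa only [smul_eq_mul, ← hrw, Real.sqrt_sq_eq_abs, Real.cosh_abs] using
      convexOn_cosh_sqrt.2 (sq_nonneg (s + t)) (sq_nonneg (s - t)) hw₀ (sub_nonneg.2 hw₁)
        (add_sub_cancel w 1)
  refine chord.trans_eq ?_
  rw [Real.cosh_add, Real.cosh_sub, hw]
  field_simp
  ring

-- The difference of the two sides vanishes to second order at `0` and has second derivative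
-- `(2 - t) * sinh t`.
theorem mul_sinh_le_two_mul_exp_sub_one_sub {t : ℝ} (ht : 0 ≤ t) (ht₂ : t ≤ 2) :
    t * Real.sinh t ≤ 2 * (Real.exp t - 1 - t) := by
  set f : ℝ → ℝ := fun u => 2 * (Real.exp u - 1 - u) - u * Real.sinh u
  set f' : ℝ → ℝ := fun u => 2 * (Real.exp u - 1) - (Real.sinh u + u * Real.cosh u)
  have hf (u : ℝ) : HasDerivAt f (f' u) u := by
    have := ((((Real.hasDerivAt_exp u).sub_const 1).sub (hasDerivAt_id' u)).const_mul 2).sub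
      ((hasDerivAt_id' u).mul (Real.hasDerivAt_sinh u))
    exact this.congr_deriv (by ring)
  have hf' (u : ℝ) : HasDerivAt f' ((2 - u) * Real.sinh u) u := by
    have := (((Real.hasDerivAt_exp u).sub_const 1).const_mul 2).sub
      ((Real.hasDerivAt_sinh u).add ((hasDerivAt_id' u).mul (Real.hasDerivAt_cosh u)))
    refine this.congr_deriv ?_
    rw [← Real.cosh_add_sinh u]
    ring
  have nonneg_of_deriv {g g' : ℝ → ℝ} (hg : ∀ u, HasDerivAt g (g' u) u) (hg₀ : g 0 = 0)
      (hg' : ∀ u ∈ Set.Icc (0 : ℝ) 2, 0 ≤ g' u) : ∀ u ∈ Set.Icc (0 : ℝ) 2, 0 ≤ g u := by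
    intro u hu
    have hmono : MonotoneOn g (Set.Icc 0 2) :=
      monotoneOn_of_hasDerivWithinAt_nonneg (convex_Icc 0 2)
        (fun x _ => (hg x).continuousAt.continuousWithinAt) (fun x _ => (hg x).hasDerivWithinAt)
        (fun x hx => hg' x (interior_subset hx))
    simpa only [hg₀] using hmono (Set.left_mem_Icc.2 zero_le_two) hu hu.1
  have hf'_nonneg : ∀ u ∈ Set.Icc (0 : ℝ) 2, 0 ≤ f' u :=
    nonneg_of_deriv hf' (by simp [f']) fun u hu =>
      mul_nonneg (by linarith [hu.2]) (Real.sinh_nonneg_iff.2 hu.1)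
  exact sub_nonneg.1 (nonneg_of_deriv hf (by simp [f]) hf'_nonneg t ⟨ht, ht₂⟩)

theorem two_mul_cosh_add_mul_sinh_le {β t : ℝ} (hβ : 1 ≤ β) (ht : 0 ≤ t) (ht₂ : t ≤ 2) :
    2 * Real.cosh t + (β ^ 2 - 1) * (t * Real.sinh t) ≤
      2 + 2 * β ^ 2 * (Real.exp t - 1 - t) := by
  have hβ₂ : 0 ≤ β ^ 2 - 1 := by nlinarith
  have hcosh : Real.cosh t ≤ Real.exp t - t := by
    linarith [Real.self_le_sinh_iff.2 ht, Real.cosh_add_sinh t]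
  linarith [mul_le_mul_of_nonneg_left (mul_sinh_le_two_mul_exp_sub_one_sub ht ht₂) hβ₂]

theorem div_div_rpow_one_div {a b p : ℝ} (ha : 0 < a) (hb : 0 ≤ b) (hp : p ≠ 0) :
    a / (a / b) ^ (1 / p) = b ^ (1 / p) * a ^ ((p - 1) / p) := by
  have hexp : (p - 1) / p = 1 - 1 / p := by field_simp
  rw [hexp, Real.rpow_sub ha, Real.rpow_one, Real.div_rpow ha.le hb, div_div_eq_mul_div,
    mul_comm a, mul_div_assoc]

theorem optimal_truncation_level {β p v L n : ℝ} (hβ : 0 < β) (hp : 1 < p) (hv : 0 < v)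
    (hL : 0 < L) (hn : 0 < n) {lam : ℝ}
    (hlam : lam = (L * β / (2 * n * v * (β * frakC p (1 / β) + Kp p * 2 ^ (p - 1)))) ^ (1 / p)) :
    0 < lam ∧
      (β * L / n + (8 * β * expRemainder (2 * (1 / β)) + Kp p) * (lam ^ p * v)) / lam ≤
        2 * (2 * v * (β * frakC p (1 / β) + Kp p * 2 ^ (p - 1))) ^ (1 / p) *
          (β * L / n) ^ ((p - 1) / p) := by
  have hK := Kp_pos hp
  have hφ := four_mul_expRemainder_le_frakC hp.le (1 / β)
  have hC : 0 ≤ frakC p (1 / β) := le_trans (by linarith [expRemainder_nonneg (2 * (1 / β))]) hφ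
  set A := β * frakC p (1 / β) + Kp p * 2 ^ (p - 1)
  have hA₀ : 0 < A := by positivity
  have ha : 0 < β * L / n := by positivity
  replace hlam : lam = (β * L / n / (2 * v * A)) ^ (1 / p) := by
    rw [hlam]
    congr 1
    field_simp
  have hlam₀ : 0 < lam := by rw [hlam]; positivity
  have hlam_pow : lam ^ p * v = β * L / n / (2 * A) := by
    rw [hlam, one_div p, Real.rpow_inv_rpow (by positivity) (by linarith)]
    field_simp
  have hcoeff : 8 * β * expRemainder (2 * (1 / β)) + Kp p ≤ 2 * A := by
    have hone : 1 ≤ (2 : ℝ) ^ (p - 1) := Real.one_le_rpow one_le_two (by linarith)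
    linarith [mul_le_mul_of_nonneg_left hφ hβ.le, le_mul_of_one_le_right hK.le hone]
  refine ⟨hlam₀, ?_⟩
  calc (β * L / n + (8 * β * expRemainder (2 * (1 / β)) + Kp p) * (lam ^ p * v)) / lam
      ≤ (β * L / n + 2 * A * (lam ^ p * v)) / lam := by gcongr
    _ = 2 * (β * L / n / lam) := by
        rw [hlam_pow, mul_div_cancel₀ _ (by positivity), ← two_mul, mul_div_assoc]
    _ = 2 * (2 * v * A) ^ (1 / p) * (β * L / n) ^ ((p - 1) / p) := by
        rw [hlam, div_div_rpow_one_div ha (by positivity) (by linarith), ← mul_assoc]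

end RealInequalities

section SmoothNorm

/-- A normed group is `(2, β)`-smooth if its norm satisfies the upper half of the parallelogram
law with the perturbation term inflated by `β ^ 2`; the martingale inequalities below hold in such
spaces. The normalization `1 ≤ β` is part of the definition; for `0 ≤ β` it is automatic unless the
group is trivial. -/
structure IsTwoSmooth (B : Type*) [NormedAddCommGroup B] (β : ℝ) : Prop where
  one_le : 1 ≤ β
  norm_add_sq_add_norm_sub_sq_le (x y : B) :
    ‖x + y‖ ^ 2 + ‖x - y‖ ^ 2 ≤ 2 * ‖x‖ ^ 2 + 2 * β ^ 2 * ‖y‖ ^ 2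

theorem cosh_norm_add_le {B : Type*} [SeminormedAddCommGroup B] (x y : B) :
    Real.cosh ‖x + y‖ ≤ Real.cosh ‖x‖ * Real.cosh ‖y‖ + (‖x + y‖ ^ 2 - ‖x‖ ^ 2 - ‖y‖ ^ 2) / 2 *
      (Real.sinh ‖x‖ / ‖x‖ * (Real.sinh ‖y‖ / ‖y‖)) :=
  cosh_le_cosh_mul_cosh_add (norm_nonneg x) (norm_nonneg y)
    (by simpa using abs_norm_sub_norm_le x (-y)) (norm_add_le x y)

theorem exists_dual_cosh_norm_add_le {B : Type*} [SeminormedAddCommGroup B] [NormedSpace ℝ B]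
    (x : B) : ∃ g : B →L[ℝ] ℝ, ∀ y, Real.cosh ‖x‖ + g y ≤ Real.cosh ‖x + y‖ := by
  obtain ⟨f, hf_norm, hf_apply⟩ := exists_dual_vector'' ℝ x
  refine ⟨Real.sinh ‖x‖ • f, fun y => ?_⟩
  have hsupport : f y ≤ ‖x + y‖ - ‖x‖ := by
    have : f (x + y) ≤ ‖x + y‖ :=
      (le_abs_self _).trans (by simpa using f.le_of_opNorm_le hf_norm (x + y))
    rw [map_add, hf_apply] at this
    exact le_sub_iff_add_le'.2 this
  calc Real.cosh ‖x‖ + Real.sinh ‖x‖ * f y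
      ≤ Real.cosh ‖x‖ + Real.sinh ‖x‖ * (‖x + y‖ - ‖x‖) := by
        gcongr
    _ ≤ Real.cosh ‖x + y‖ := cosh_add_sinh_mul_le _ _

variable {B : Type*} [NormedAddCommGroup B] {β : ℝ}

theorem IsTwoSmooth.cosh_norm_add_add_cosh_norm_sub_le (hB : IsTwoSmooth B β) (x : B) {y : B}
    (hy : ‖y‖ ≤ 2) :
    Real.cosh ‖x + y‖ + Real.cosh ‖x - y‖ ≤
      Real.cosh ‖x‖ * (2 + 2 * β ^ 2 * (Real.exp ‖y‖ - 1 - ‖y‖)) := by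
  have hβ₂ : 0 ≤ β ^ 2 - 1 := by nlinarith [hB.one_le]
  set sx := Real.sinh ‖x‖ / ‖x‖
  set sy := Real.sinh ‖y‖ / ‖y‖
  have hsx : sx ≤ Real.cosh ‖x‖ :=
    div_le_of_le_mul₀ (norm_nonneg x) (Real.cosh_pos _).le
      ((sinh_le_mul_cosh (norm_nonneg x)).trans_eq (mul_comm _ _))
  have : 0 ≤ sy := div_nonneg (Real.sinh_nonneg_iff.2 (norm_nonneg y)) (norm_nonneg y)
  have hsy : ‖y‖ ^ 2 * sy = ‖y‖ * Real.sinh ‖y‖ := by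
    rcases eq_or_ne ‖y‖ 0 with h | h
    · simp [h]
    · simp only [sy]; field_simp
  have hadd := cosh_norm_add_le x y
  have hsub := cosh_norm_add_le x (-y)
  rw [norm_neg, ← sub_eq_add_neg] at hsub
  have hsmooth : (‖x + y‖ ^ 2 + ‖x - y‖ ^ 2 - 2 * ‖x‖ ^ 2 - 2 * ‖y‖ ^ 2) / 2 ≤
      (β ^ 2 - 1) * ‖y‖ ^ 2 := by
    linarith [hB.norm_add_sq_add_norm_sub_sq_le x y]
  calc Real.cosh ‖x + y‖ + Real.cosh ‖x - y‖
      ≤ 2 * (Real.cosh ‖x‖ * Real.cosh ‖y‖) +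
          (‖x + y‖ ^ 2 + ‖x - y‖ ^ 2 - 2 * ‖x‖ ^ 2 - 2 * ‖y‖ ^ 2) / 2 * (sx * sy) := by linarith
    _ ≤ 2 * (Real.cosh ‖x‖ * Real.cosh ‖y‖) +
          (β ^ 2 - 1) * ‖y‖ ^ 2 * (Real.cosh ‖x‖ * sy) := by gcongr
    _ = Real.cosh ‖x‖ * (2 * Real.cosh ‖y‖ + (β ^ 2 - 1) * (‖y‖ * Real.sinh ‖y‖)) := by
        rw [← hsy]; ring
    _ ≤ Real.cosh ‖x‖ * (2 + 2 * β ^ 2 * (Real.exp ‖y‖ - 1 - ‖y‖)) := by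
        exact mul_le_mul_of_nonneg_left
          (two_mul_cosh_add_mul_sinh_le hB.one_le (norm_nonneg y) hy) (Real.cosh_pos _).le

theorem IsTwoSmooth.exists_dual_cosh_norm_add_le_mul [NormedSpace ℝ B] (hB : IsTwoSmooth B β)
    {r : ℝ} (hr : r ≤ 2) (x : B) :
    ∃ g : B →L[ℝ] ℝ, ∀ y, ‖y‖ ≤ r →
      Real.cosh ‖x + y‖ ≤ Real.cosh ‖x‖ * (1 + 2 * β ^ 2 * expRemainder r * ‖y‖ ^ 2) + g y := by
  obtain ⟨g, hg⟩ := exists_dual_cosh_norm_add_le x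
  refine ⟨g, fun y hy => ?_⟩
  have hsub : Real.cosh ‖x‖ - g y ≤ Real.cosh ‖x - y‖ := by
    simpa [sub_eq_add_neg] using hg (-y)
  calc Real.cosh ‖x + y‖
      ≤ Real.cosh ‖x‖ * (2 + 2 * β ^ 2 * (Real.exp ‖y‖ - 1 - ‖y‖)) - Real.cosh ‖x - y‖ :=
        le_sub_iff_add_le.2 (hB.cosh_norm_add_add_cosh_norm_sub_le x (hy.trans hr))
    _ ≤ Real.cosh ‖x‖ * (2 + 2 * β ^ 2 * (expRemainder r * ‖y‖ ^ 2)) -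
          (Real.cosh ‖x‖ - g y) := by
        gcongr
        exact exp_sub_one_sub_le_expRemainder_mul_sq (norm_nonneg y) hy
    _ = Real.cosh ‖x‖ * (1 + 2 * β ^ 2 * expRemainder r * ‖y‖ ^ 2) + g y := by ring

end SmoothNorm

section Martingale

variable {Ω : Type*} {m mΩ : MeasurableSpace Ω} {P : Measure Ω}

theorem integral_clm_apply_eq_zero_of_condExp_eq_zero {B E : Type*} [NormedAddCommGroup B]
    [NormedSpace ℝ B] [CompleteSpace B] [NormedAddCommGroup E] [NormedSpace ℝ E] [CompleteSpace E]
    (hm : m ≤ mΩ) [SigmaFinite (P.trim hm)] {G : Ω → B →L[ℝ] E} {D : Ω → B}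
    (hG : StronglyMeasurable[m] G) (hGD : Integrable (fun ω => G ω (D ω)) P) (hD : Integrable D P)
    (hD₀ : P[D | m] =ᵐ[P] 0) : ∫ ω, G ω (D ω) ∂P = 0 := by
  rw [← integral_condExp hm]
  refine integral_eq_zero_of_ae ?_
  filter_upwards [condExp_bilin_of_stronglyMeasurable_left (.id ℝ _) hG hGD hD, hD₀]
    with ω hpull hω
  simpa [hω] using hpull

theorem integral_mul_le_mul_integral_of_condExp_le (hm : m ≤ mΩ) [SigmaFinite (P.trim hm)]
    {f h : Ω → ℝ} {V : ℝ} (hf : StronglyMeasurable[m] f) (hf₀ : 0 ≤ f) (hf_int : Integrable f P)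
    (hh : Integrable h P) (hfh : Integrable (f * h) P) (hV : ∀ᵐ ω ∂P, (P[h | m]) ω ≤ V) :
    ∫ ω, f ω * h ω ∂P ≤ V * ∫ ω, f ω ∂P := by
  have hle : P[f * h | m] ≤ᵐ[P] fun ω => V * f ω := by
    filter_upwards [condExp_mul_of_stronglyMeasurable_left hf hfh hh, hV] with ω hpull hω
    rw [hpull, Pi.mul_apply, mul_comm]
    exact mul_le_mul_of_nonneg_right hω (hf₀ ω)
  calc ∫ ω, f ω * h ω ∂P = ∫ ω, (P[f * h | m]) ω ∂P := (integral_condExp hm).symm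
    _ ≤ ∫ ω, V * f ω ∂P := integral_mono_ae integrable_condExp (hf_int.const_mul V) hle
    _ = V * ∫ ω, f ω ∂P := integral_const_mul V f

theorem norm_cosh_norm_le {B : Type*} [SeminormedAddCommGroup B] {x : B} {c : ℝ} (hx : ‖x‖ ≤ c) :
    ‖Real.cosh ‖x‖‖ ≤ Real.cosh c := by
  rwa [Real.norm_of_nonneg (Real.cosh_pos _).le, Real.cosh_le_cosh, abs_norm,
    abs_of_nonneg ((norm_nonneg x).trans hx)]

variable {B : Type*} [NormedAddCommGroup B]

theorem integrable_cosh_norm_of_bound [IsFiniteMeasure P] {S : Ω → B} {c : ℝ}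
    (hS : AEStronglyMeasurable S P) (hSc : ∀ᵐ ω ∂P, ‖S ω‖ ≤ c) :
    Integrable (fun ω => Real.cosh ‖S ω‖) P :=
  .of_bound (Real.continuous_cosh.comp_aestronglyMeasurable hS.norm) (Real.cosh c)
    (hSc.mono fun _ => norm_cosh_norm_le)

variable [NormedSpace ℝ B] [CompleteSpace B] {β r V : ℝ}

theorem integral_le_mul_integral_of_quadratic_majorant [IsFiniteMeasure P] (hm : m ≤ mΩ)
    {F f : Ω → ℝ} {κ C : ℝ} {G : Ω → B →L[ℝ] ℝ} {D : Ω → B} (hκ : 0 ≤ κ) (hF : 0 ≤ F)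
    (hf : StronglyMeasurable[m] f) (hf₀ : 0 ≤ f) (hf_int : Integrable f P)
    (hG : StronglyMeasurable[m] G) (hGC : ∀ ω, ‖G ω‖ ≤ C)
    (hD : Integrable D P) (hDr : ∀ᵐ ω ∂P, ‖D ω‖ ≤ r) (hD₀ : P[D | m] =ᵐ[P] 0)
    (hDV : ∀ᵐ ω ∂P, (P[fun ω => ‖D ω‖ ^ 2 | m]) ω ≤ V)
    (hle : ∀ᵐ ω ∂P, F ω ≤ f ω * (1 + κ * ‖D ω‖ ^ 2) + G ω (D ω)) :
    ∫ ω, F ω ∂P ≤ (1 + κ * V) * ∫ ω, f ω ∂P := by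
  have hGD : Integrable (fun ω => G ω (D ω)) P :=
    (ContinuousLinearMap.id ℝ (B →L[ℝ] ℝ)).integrable_of_bilin_of_bdd_left C
      (hG.mono hm).aestronglyMeasurable (.of_forall hGC) hD
  have hD_sq_le : ∀ᵐ ω ∂P, ‖‖D ω‖ ^ 2‖ ≤ r ^ 2 := hDr.mono fun ω hω => by
    rw [norm_pow, norm_norm]
    gcongr
  have hD_sq : Integrable (fun ω => ‖D ω‖ ^ 2) P := .of_bound (hD.1.norm.pow 2) (r ^ 2) hD_sq_le
  have hprod : Integrable (fun ω => f ω * ‖D ω‖ ^ 2) P := hf_int.mul_bdd hD_sq.1 hD_sq_le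
  have hquad : Integrable (fun ω => f ω + κ * (f ω * ‖D ω‖ ^ 2)) P :=
    hf_int.add (hprod.const_mul κ)
  calc ∫ ω, F ω ∂P
      ≤ ∫ ω, (f ω + κ * (f ω * ‖D ω‖ ^ 2)) + G ω (D ω) ∂P :=
        integral_mono_of_nonneg (.of_forall hF) (hquad.add hGD)
          (hle.mono fun ω hω => hω.trans_eq (by ring))
    _ = ∫ ω, f ω ∂P + κ * ∫ ω, f ω * ‖D ω‖ ^ 2 ∂P := by
        rw [integral_add hquad hGD,
          integral_clm_apply_eq_zero_of_condExp_eq_zero hm hG hGD hD hD₀, add_zero,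
          integral_add hf_int (hprod.const_mul κ), integral_const_mul]
    _ ≤ ∫ ω, f ω ∂P + κ * (V * ∫ ω, f ω ∂P) := by
        gcongr
        exact integral_mul_le_mul_integral_of_condExp_le hm hf hf₀ hf_int hD_sq hprod hDV
    _ = (1 + κ * V) * ∫ ω, f ω ∂P := by ring

theorem IsTwoSmooth.integral_cosh_norm_simpleFunc_add_le [IsFiniteMeasure P]
    (hB : IsTwoSmooth B β) (hr : r ≤ 2) (hm : m ≤ mΩ) (S : @SimpleFunc Ω m B) {D : Ω → B}
    (hD : Integrable D P) (hDr : ∀ᵐ ω ∂P, ‖D ω‖ ≤ r) (hD₀ : P[D | m] =ᵐ[P] 0)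
    (hDV : ∀ᵐ ω ∂P, (P[fun ω => ‖D ω‖ ^ 2 | m]) ω ≤ V) :
    ∫ ω, Real.cosh ‖S ω + D ω‖ ∂P ≤
      (1 + 2 * β ^ 2 * expRemainder r * V) * ∫ ω, Real.cosh ‖S ω‖ ∂P := by
  choose g hg using hB.exists_dual_cosh_norm_add_le_mul hr
  have hS : StronglyMeasurable[m] S := S.stronglyMeasurable
  let G : @SimpleFunc Ω m (B →L[ℝ] ℝ) := @SimpleFunc.map Ω B _ m g S
  obtain ⟨c, hc⟩ := @SimpleFunc.exists_forall_norm_le Ω _ m _ S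
  obtain ⟨C, hC⟩ := @SimpleFunc.exists_forall_norm_le Ω _ m _ G
  exact integral_le_mul_integral_of_quadratic_majorant hm (G := G)
    (mul_nonneg (by positivity) (expRemainder_nonneg r)) (fun _ => (Real.cosh_pos _).le)
    (Real.continuous_cosh.comp_stronglyMeasurable hS.norm) (fun _ => (Real.cosh_pos _).le)
    (integrable_cosh_norm_of_bound (hS.mono hm).aestronglyMeasurable (.of_forall hc))
    G.stronglyMeasurable hC hD hDr hD₀ hDV (hDr.mono fun ω => hg (S ω) (D ω))

-- The subgradients at `S ω` need not depend measurably on `ω`, hence the detour through simple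
-- functions.
theorem IsTwoSmooth.integral_cosh_norm_add_le [IsProbabilityMeasure P]
    (hB : IsTwoSmooth B β) (hr : r ≤ 2) (hm : m ≤ mΩ) {S D : Ω → B} {c : ℝ}
    (hS : StronglyMeasurable[m] S) (hSc : ∀ᵐ ω ∂P, ‖S ω‖ ≤ c)
    (hD : Integrable D P) (hDr : ∀ᵐ ω ∂P, ‖D ω‖ ≤ r) (hD₀ : P[D | m] =ᵐ[P] 0)
    (hDV : ∀ᵐ ω ∂P, (P[fun ω => ‖D ω‖ ^ 2 | m]) ω ≤ V) :
    ∫ ω, Real.cosh ‖S ω + D ω‖ ∂P ≤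
      (1 + 2 * β ^ 2 * expRemainder r * V) * ∫ ω, Real.cosh ‖S ω‖ ∂P := by
  obtain ⟨ω₀, hω₀⟩ := hSc.exists
  have hc : 0 ≤ c := (norm_nonneg _).trans hω₀
  set T : ℕ → Ω → B := fun n => hS.approxBounded c n
  have hT_meas (n : ℕ) : AEStronglyMeasurable (T n) P :=
    ((hS.approxBounded c n).stronglyMeasurable.mono hm).aestronglyMeasurable
  have hT_le (n : ℕ) (ω : Ω) : ‖T n ω‖ ≤ c := hS.norm_approxBounded_le hc n ω
  have hT_lim := hS.tendsto_approxBounded_ae hSc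
  have hcont : Continuous fun y : B => Real.cosh ‖y‖ := Real.continuous_cosh.comp continuous_norm
  have lim_add : Filter.Tendsto (fun n => ∫ ω, Real.cosh ‖T n ω + D ω‖ ∂P) .atTop
      (nhds (∫ ω, Real.cosh ‖S ω + D ω‖ ∂P)) :=
    tendsto_integral_of_dominated_convergence (fun _ => Real.cosh (c + r))
      (fun n => hcont.comp_aestronglyMeasurable ((hT_meas n).add hD.1)) (integrable_const _)
      (fun n => hDr.mono fun ω hω => norm_cosh_norm_le (norm_add_le_of_le (hT_le n ω) hω))
      (hT_lim.mono fun ω hω => (hcont.tendsto _).comp (hω.add_const (D ω)))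
  have lim : Filter.Tendsto (fun n => ∫ ω, Real.cosh ‖T n ω‖ ∂P) .atTop
      (nhds (∫ ω, Real.cosh ‖S ω‖ ∂P)) :=
    tendsto_integral_of_dominated_convergence (fun _ => Real.cosh c)
      (fun n => hcont.comp_aestronglyMeasurable (hT_meas n)) (integrable_const _)
      (fun n => .of_forall fun ω => norm_cosh_norm_le (hT_le n ω))
      (hT_lim.mono fun ω hω => (hcont.tendsto _).comp hω)
  exact le_of_tendsto_of_tendsto' lim_add (lim.const_mul _) fun n =>
    hB.integral_cosh_norm_simpleFunc_add_le hr hm (hS.approxBounded c n) hD hDr hD₀ hDV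

theorem ae_norm_sum_range_le {E : Type*} [SeminormedAddCommGroup E] {D : ℕ → Ω → E}
    (hDr : ∀ k, ∀ᵐ ω ∂P, ‖D k ω‖ ≤ r) (n : ℕ) :
    ∀ᵐ ω ∂P, ‖∑ k ∈ Finset.range n, D k ω‖ ≤ n * r := by
  filter_upwards [ae_all_iff.2 hDr] with ω hω
  simpa using norm_sum_le_of_le (Finset.range n) fun k _ => hω k

variable [IsProbabilityMeasure P] {ℱ : Filtration ℕ mΩ} {D : ℕ → Ω → B}

theorem IsTwoSmooth.integral_cosh_norm_sum_range_le (hB : IsTwoSmooth B β) (hr : r ≤ 2)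
    (hV : 0 ≤ V) (hD_meas : ∀ k, StronglyMeasurable[ℱ (k + 1)] (D k))
    (hDr : ∀ k, ∀ᵐ ω ∂P, ‖D k ω‖ ≤ r) (hD₀ : ∀ k, P[D k | ℱ k] =ᵐ[P] 0)
    (hDV : ∀ k, ∀ᵐ ω ∂P, (P[fun ω => ‖D k ω‖ ^ 2 | ℱ k]) ω ≤ V) (n : ℕ) :
    ∫ ω, Real.cosh ‖∑ k ∈ Finset.range n, D k ω‖ ∂P ≤
      (1 + 2 * β ^ 2 * expRemainder r * V) ^ n := by
  have hfactor : 0 ≤ 1 + 2 * β ^ 2 * expRemainder r * V := by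
    have := expRemainder_nonneg r
    positivity
  induction n with
  | zero => simp
  | succ n ih =>
    have hS : StronglyMeasurable[ℱ n] fun ω => ∑ k ∈ Finset.range n, D k ω :=
      Finset.stronglyMeasurable_fun_sum _ fun k hk =>
        (hD_meas k).mono (ℱ.mono (Finset.mem_range.1 hk))
    have hD : Integrable (D n) P :=
      .of_bound ((hD_meas n).mono (ℱ.le _)).aestronglyMeasurable r (hDr n)
    simp only [Finset.sum_range_succ]
    refine (hB.integral_cosh_norm_add_le hr (ℱ.le n) hS (ae_norm_sum_range_le hDr n) hD (hDr n)
      (hD₀ n) (hDV n)).trans ?_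
    rw [pow_succ' _ n]
    exact mul_le_mul_of_nonneg_left ih hfactor

theorem IsTwoSmooth.measureReal_le_norm_sum_range_le (hB : IsTwoSmooth B β) (hr : r ≤ 2)
    (hV : 0 ≤ V) (hD_meas : ∀ k, StronglyMeasurable[ℱ (k + 1)] (D k))
    (hDr : ∀ k, ∀ᵐ ω ∂P, ‖D k ω‖ ≤ r) (hD₀ : ∀ k, P[D k | ℱ k] =ᵐ[P] 0)
    (hDV : ∀ k, ∀ᵐ ω ∂P, (P[fun ω => ‖D k ω‖ ^ 2 | ℱ k]) ω ≤ V) (n : ℕ) (L : ℝ) :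
    P.real {ω | L + n * (2 * β ^ 2 * expRemainder r * V) ≤ ‖∑ k ∈ Finset.range n, D k ω‖} ≤
      2 * Real.exp (-L) := by
  set κ := 2 * β ^ 2 * expRemainder r * V
  have hκ : 0 ≤ κ := by have := expRemainder_nonneg r; positivity
  set S : Ω → B := fun ω => ∑ k ∈ Finset.range n, D k ω
  have hS : AEStronglyMeasurable S P :=
    Finset.aestronglyMeasurable_fun_sum _ fun k _ =>
      ((hD_meas k).mono (ℱ.le _)).aestronglyMeasurable
  have hcosh : ∫ ω, Real.cosh ‖S ω‖ ∂P ≤ Real.exp (n * κ) :=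
    calc ∫ ω, Real.cosh ‖S ω‖ ∂P ≤ (1 + κ) ^ n :=
          hB.integral_cosh_norm_sum_range_le hr hV hD_meas hDr hD₀ hDV n
      _ ≤ Real.exp κ ^ n := by
          gcongr
          linarith [Real.add_one_le_exp κ]
      _ = Real.exp (n * κ) := (Real.exp_nat_mul κ n).symm
  have hsub : {ω | L + n * κ ≤ ‖S ω‖} ⊆ {ω | Real.exp (L + n * κ) / 2 ≤ Real.cosh ‖S ω‖} := by
    intro ω (hω : L + n * κ ≤ ‖S ω‖)
    have : Real.exp (L + n * κ) ≤ Real.exp ‖S ω‖ := by gcongr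
    rw [Set.mem_ofPred_eq, Real.cosh_eq]
    linarith [Real.exp_pos (-‖S ω‖)]
  have hmarkov := mul_meas_ge_le_integral_of_nonneg (.of_forall fun ω => (Real.cosh_pos ‖S ω‖).le)
    (integrable_cosh_norm_of_bound hS (ae_norm_sum_range_le hDr n)) (Real.exp (L + n * κ) / 2)
  refine (measureReal_mono hsub).trans ?_
  rw [← le_div_iff₀' (by positivity)] at hmarkov
  calc _ ≤ (∫ ω, Real.cosh ‖S ω‖ ∂P) / (Real.exp (L + n * κ) / 2) := hmarkov
    _ ≤ Real.exp (n * κ) / (Real.exp (L + n * κ) / 2) := by gcongr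
    _ = 2 * Real.exp (-L) := by
        rw [Real.exp_add, Real.exp_neg]
        field_simp

theorem IsTwoSmooth.measureReal_le_mul_norm_sum_range_le (hB : IsTwoSmooth B β) {θ : ℝ}
    (hθ : 0 ≤ θ) (hθr : θ * r ≤ 2) (hV : 0 ≤ V)
    (hD_meas : ∀ k, StronglyMeasurable[ℱ (k + 1)] (D k))
    (hDr : ∀ k, ∀ᵐ ω ∂P, ‖D k ω‖ ≤ r) (hD₀ : ∀ k, P[D k | ℱ k] =ᵐ[P] 0)
    (hDV : ∀ k, ∀ᵐ ω ∂P, (P[fun ω => ‖D k ω‖ ^ 2 | ℱ k]) ω ≤ V) (n : ℕ) (L : ℝ) :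
    P.real {ω | L + n * (2 * β ^ 2 * expRemainder (θ * r) * (θ ^ 2 * V)) ≤
      θ * ‖∑ k ∈ Finset.range n, D k ω‖} ≤ 2 * Real.exp (-L) := by
  have hnorm (y : B) : ‖θ • y‖ = θ * ‖y‖ := by rw [norm_smul, Real.norm_of_nonneg hθ]
  have hsq (k : ℕ) : (fun ω => ‖(θ • D k) ω‖ ^ 2) = θ ^ 2 • fun ω => ‖D k ω‖ ^ 2 := by
    ext ω
    simp only [Pi.smul_apply, hnorm, mul_pow, smul_eq_mul]
  simp only [← hnorm, Finset.smul_sum]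
  refine hB.measureReal_le_norm_sum_range_le (D := fun k => θ • D k) hθr (by positivity)
    (fun k => (hD_meas k).const_smul θ) (fun k => ?_) (fun k => ?_) (fun k => ?_) n L
  · filter_upwards [hDr k] with ω hω
    rw [Pi.smul_apply, hnorm]
    gcongr
  · filter_upwards [condExp_smul θ (D k) (ℱ k), hD₀ k] with ω hsmul hω
    simp [hsmul, hω]
  · rw [hsq]
    filter_upwards [condExp_smul (θ ^ 2) (fun ω => ‖D k ω‖ ^ 2) (ℱ k), hDV k] with ω hsmul hω
    rw [hsmul, Pi.smul_apply, smul_eq_mul]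
    gcongr

end Martingale

section Truncation

variable {B : Type*} [NormedAddCommGroup B]

theorem truncB_eq_inv_max (x : B) : truncB x = (max 1 ‖x‖)⁻¹ := by
  rcases eq_or_ne x 0 with rfl | hx
  · simp [truncB]
  have : 0 < ‖x‖ := norm_pos_iff.2 hx
  rcases le_total 1 ‖x‖ with h | h <;> simp [truncB, hx, h]

variable [NormedSpace ℝ B] {p : ℝ}

/-- The radial projection onto the closed unit ball. -/
noncomputable def unitBallProj (x : B) : B :=
  truncB x • x

theorem unitBallProj_smul (c : ℝ) (x : B) :
    unitBallProj (c • x) = c • (truncB (c • x) • x) :=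
  smul_comm _ _ _

theorem continuous_unitBallProj : Continuous (unitBallProj : B → B) := by
  have hmax (x : B) : max 1 ‖x‖ ≠ 0 := (lt_max_of_lt_left one_pos).ne'
  unfold unitBallProj
  simp only [truncB_eq_inv_max]
  fun_prop (disch := assumption)

theorem unitBallProj_of_norm_le_one {x : B} (hx : ‖x‖ ≤ 1) : unitBallProj x = x := by
  rw [unitBallProj, truncB_eq_inv_max, max_eq_left hx, inv_one, one_smul]

theorem norm_unitBallProj_of_one_le_norm {x : B} (hx : 1 ≤ ‖x‖) : ‖unitBallProj x‖ = 1 := by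
  have hx₀ : ‖x‖ ≠ 0 := (one_pos.trans_le hx).ne'
  rw [unitBallProj, truncB_eq_inv_max, max_eq_right hx, norm_smul, norm_inv, norm_norm,
    inv_mul_cancel₀ hx₀]

theorem norm_unitBallProj_le_one (x : B) : ‖unitBallProj x‖ ≤ 1 := by
  rcases le_total ‖x‖ 1 with hx | hx
  · rwa [unitBallProj_of_norm_le_one hx]
  · exact (norm_unitBallProj_of_one_le_norm hx).le

theorem norm_unitBallProj_sq_le (hp₀ : 0 ≤ p) (hp₂ : p ≤ 2) (x : B) :
    ‖unitBallProj x‖ ^ 2 ≤ ‖x‖ ^ p := by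
  rcases le_total ‖x‖ 1 with hx | hx
  · rw [unitBallProj_of_norm_le_one hx, ← Real.rpow_two]
    exact Real.rpow_le_rpow_of_exponent_ge_of_imp (norm_nonneg x) hx hp₂ fun _ h =>
      absurd h two_ne_zero
  · rw [norm_unitBallProj_of_one_le_norm hx, one_pow]
    exact Real.one_le_rpow hx hp₀

theorem norm_unitBallProj_sub_self_le (hp : 1 < p) (x : B) :
    ‖unitBallProj x - x‖ ≤ Kp p * ‖x‖ ^ p := by
  have hK := Kp_pos hp
  rcases le_total ‖x‖ 1 with hx | hx
  · rw [unitBallProj_of_norm_le_one hx, sub_self, norm_zero]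
    positivity
  have hx₀ : ‖x‖ ≠ 0 := (one_pos.trans_le hx).ne'
  calc ‖unitBallProj x - x‖ = ‖(‖x‖⁻¹ - 1) • x‖ := by
        rw [unitBallProj, truncB_eq_inv_max, max_eq_right hx, sub_smul, one_smul]
    _ = ‖x‖ - 1 := by
        rw [norm_smul, Real.norm_of_nonpos (sub_nonpos.2 (inv_le_one_of_one_le₀ hx)), neg_sub,
          sub_mul, one_mul, inv_mul_cancel₀ hx₀]
    _ ≤ Kp p * ‖x‖ ^ p := sub_one_le_Kp_mul_rpow hp (norm_nonneg x)

end Truncation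

section Centering

variable {Ω : Type*} {m mΩ : MeasurableSpace Ω} {P : Measure Ω}
  {B : Type*} [NormedAddCommGroup B] [NormedSpace ℝ B] [CompleteSpace B] {T : Ω → B}

theorem condExp_sub_condExp_self (hm : m ≤ mΩ) [SigmaFinite (P.trim hm)] (hT : Integrable T P) :
    P[T - P[T | m] | m] =ᵐ[P] 0 := by
  filter_upwards [condExp_sub hT integrable_condExp m] with ω hω
  rw [hω, condExp_of_stronglyMeasurable hm stronglyMeasurable_condExp integrable_condExp, sub_self]

theorem ae_norm_sub_condExp_le {c : ℝ} (hT : ∀ᵐ ω ∂P, ‖T ω‖ ≤ c) :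
    ∀ᵐ ω ∂P, ‖T ω - (P[T | m]) ω‖ ≤ 2 * c := by
  filter_upwards [hT, ae_bdd_norm_condExp_of_ae_bdd_norm (m := m) hT] with ω hω hω'
  exact (norm_sub_le_of_le hω hω').trans_eq (two_mul c).symm

theorem condExp_norm_sub_condExp_sq_le (hm : m ≤ mΩ) [SigmaFinite (P.trim hm)]
    (hT : MemLp T 2 P) :
    P[fun ω => ‖T ω - (P[T | m]) ω‖ ^ 2 | m] ≤ᵐ[P] 4 • P[fun ω => ‖T ω‖ ^ 2 | m] := by
  set U : Ω → B := P[T | m]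
  have hU : MemLp U 2 P := hT.condExp one_le_two
  have hT_sq : Integrable (fun ω => ‖T ω‖ ^ 2) P := hT.integrable_norm_pow two_ne_zero
  have hU_sq : Integrable (fun ω => ‖U ω‖ ^ 2) P := hU.integrable_norm_pow two_ne_zero
  have hTU_sq : Integrable (fun ω => ‖T ω - U ω‖ ^ 2) P :=
    (hT.sub hU).integrable_norm_pow two_ne_zero
  have hle : (fun ω => ‖T ω - U ω‖ ^ 2) ≤
      (2 : ℝ) • ((fun ω => ‖T ω‖ ^ 2) + fun ω => ‖U ω‖ ^ 2) := fun ω =>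
    calc ‖T ω - U ω‖ ^ 2 ≤ (‖T ω‖ + ‖U ω‖) ^ 2 := by gcongr; exact norm_sub_le _ _
      _ ≤ 2 * (‖T ω‖ ^ 2 + ‖U ω‖ ^ 2) := add_sq_le
  have jensen : (fun ω => ‖U ω‖ ^ 2) ≤ᵐ[P] P[fun ω => ‖T ω‖ ^ 2 | m] := by
    simpa using Integrable.norm_condExp_rpow_le (p := 2) one_le_two (by simpa using hT_sq)
  have hU_meas : StronglyMeasurable[m] fun ω => ‖U ω‖ ^ 2 := stronglyMeasurable_condExp.norm.pow 2
  filter_upwards [condExp_mono (m := m) hTU_sq ((hT_sq.add hU_sq).smul (2 : ℝ)) (.of_forall hle),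
    condExp_smul (2 : ℝ) ((fun ω => ‖T ω‖ ^ 2) + fun ω => ‖U ω‖ ^ 2) m,
    condExp_add hT_sq hU_sq m, jensen] with ω hmono hsmul hadd hjensen
  rw [hsmul, Pi.smul_apply, hadd, Pi.add_apply,
    condExp_of_stronglyMeasurable hm hU_meas hU_sq, smul_eq_mul] at hmono
  simp only [Pi.smul_apply, nsmul_eq_mul]
  push_cast
  linarith

end Centering

section TruncatedMean

variable {Ω : Type*} {m mΩ : MeasurableSpace Ω} {P : Measure Ω}
  {B : Type*} [NormedAddCommGroup B] [NormedSpace ℝ B] {β p v w : ℝ}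

theorem measureReal_setOf_mono_of_ae [IsFiniteMeasure P] {q q' : Ω → Prop}
    (h : ∀ᵐ ω ∂P, q ω → q' ω) : P.real {ω | q ω} ≤ P.real {ω | q' ω} :=
  ENNReal.toReal_mono (measure_ne_top P _) (measure_mono_ae h)

theorem memLp_unitBallProj_comp [IsFiniteMeasure P] {Y : Ω → B} (hY : AEStronglyMeasurable Y P)
    (q : ENNReal) : MemLp (fun ω => unitBallProj (Y ω)) q P :=
  .of_bound (continuous_unitBallProj.comp_aestronglyMeasurable hY) 1
    (.of_forall fun ω => norm_unitBallProj_le_one (Y ω))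

variable [CompleteSpace B]

theorem ae_norm_condExp_unitBallProj_sub_condExp_le [IsFiniteMeasure P]
    (hp : 1 < p) {Y : Ω → B} (hY : Integrable Y P) (hYp : Integrable (fun ω => ‖Y ω‖ ^ p) P)
    (hw : ∀ᵐ ω ∂P, (P[fun ω => ‖Y ω‖ ^ p | m]) ω ≤ w) :
    ∀ᵐ ω ∂P, ‖(P[fun ω => unitBallProj (Y ω) | m]) ω - (P[Y | m]) ω‖ ≤ Kp p * w := by
  set T : Ω → B := fun ω => unitBallProj (Y ω)
  have hT : Integrable T P := (memLp_unitBallProj_comp hY.1 1).integrable le_rfl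
  have hmono : P[fun ω => ‖(T - Y) ω‖ | m] ≤ᵐ[P] P[Kp p • fun ω => ‖Y ω‖ ^ p | m] :=
    condExp_mono (hT.sub hY).norm (hYp.smul _)
      (.of_forall fun ω => norm_unitBallProj_sub_self_le hp (Y ω))
  filter_upwards [condExp_sub hT hY m, norm_condExp_le (μ := P) (m := m) (T - Y), hmono,
    condExp_smul (Kp p) (fun ω => ‖Y ω‖ ^ p) m, hw] with ω hsub hnorm hmono hsmul hω
  calc ‖(P[T | m]) ω - (P[Y | m]) ω‖ = ‖(P[T - Y | m]) ω‖ := by rw [hsub, Pi.sub_apply]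
    _ ≤ Kp p * (P[fun ω => ‖Y ω‖ ^ p | m]) ω := (hnorm.trans hmono).trans_eq hsmul
    _ ≤ Kp p * w := mul_le_mul_of_nonneg_left hω (Kp_pos hp).le

theorem ae_condExp_norm_unitBallProj_sub_condExp_sq_le [IsFiniteMeasure P]
    (hm : m ≤ mΩ) (hp₀ : 0 ≤ p) (hp₂ : p ≤ 2) {Y : Ω → B}
    (hY : AEStronglyMeasurable Y P) (hYp : Integrable (fun ω => ‖Y ω‖ ^ p) P)
    (hw : ∀ᵐ ω ∂P, (P[fun ω => ‖Y ω‖ ^ p | m]) ω ≤ w) :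
    ∀ᵐ ω ∂P, (P[fun ω => ‖unitBallProj (Y ω) - (P[fun ω => unitBallProj (Y ω) | m]) ω‖ ^ 2 | m]) ω
      ≤ 4 * w := by
  have hT := memLp_unitBallProj_comp hY 2
  have hmono : P[fun ω => ‖unitBallProj (Y ω)‖ ^ 2 | m] ≤ᵐ[P] P[fun ω => ‖Y ω‖ ^ p | m] :=
    condExp_mono (hT.integrable_norm_pow two_ne_zero) hYp
      (.of_forall fun ω => norm_unitBallProj_sq_le hp₀ hp₂ (Y ω))
  filter_upwards [condExp_norm_sub_condExp_sq_le hm hT, hmono, hw] with ω hcentre hmono hω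
  calc _ ≤ 4 * (P[fun ω => ‖unitBallProj (Y ω)‖ ^ 2 | m]) ω := by simpa using hcentre
    _ ≤ 4 * w := by linarith

variable [IsProbabilityMeasure P] {ℱ : Filtration ℕ mΩ}

theorem IsTwoSmooth.measureReal_le_norm_sum_unitBallProj_sub_condExp_self_le
    (hB : IsTwoSmooth B β) (hp₀ : 0 ≤ p) (hp₂ : p ≤ 2) (hw₀ : 0 ≤ w) {Y : ℕ → Ω → B}
    (hY_meas : ∀ k, StronglyMeasurable[ℱ (k + 1)] (Y k))
    (hYp : ∀ k, Integrable (fun ω => ‖Y k ω‖ ^ p) P)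
    (hw : ∀ k, ∀ᵐ ω ∂P, (P[fun ω => ‖Y k ω‖ ^ p | ℱ k]) ω ≤ w) (n : ℕ) (L : ℝ) :
    P.real {ω | β * L + n * (8 * β * expRemainder (2 * (1 / β)) * w) ≤
      ‖∑ k ∈ Finset.range n, (unitBallProj (Y k ω) - (P[fun ω => unitBallProj (Y k ω) | ℱ k]) ω)‖} ≤
        2 * Real.exp (-L) := by
  have hβ : 0 < β := one_pos.trans_le hB.one_le
  have hY (k : ℕ) : AEStronglyMeasurable (Y k) P := ((hY_meas k).mono (ℱ.le _)).aestronglyMeasurable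
  set T : ℕ → Ω → B := fun k ω => unitBallProj (Y k ω)
  have hD_meas (k : ℕ) : StronglyMeasurable[ℱ (k + 1)] (T k - P[T k | ℱ k]) :=
    (continuous_unitBallProj.comp_stronglyMeasurable (hY_meas k)).sub
      (stronglyMeasurable_condExp.mono (ℱ.mono k.le_succ))
  have tail := hB.measureReal_le_mul_norm_sum_range_le (θ := 1 / β) (r := 2 * 1) (V := 4 * w)
    (by positivity) (by rw [mul_one, div_mul_eq_mul_div, div_le_iff₀ hβ]; linarith [hB.one_le])
    (by positivity) hD_meas
    (fun k => ae_norm_sub_condExp_le (.of_forall fun ω => norm_unitBallProj_le_one (Y k ω)))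
    (fun k => condExp_sub_condExp_self (ℱ.le k)
      ((memLp_unitBallProj_comp (hY k) 1).integrable le_rfl))
    (fun k => ae_condExp_norm_unitBallProj_sub_condExp_sq_le (ℱ.le k) hp₀ hp₂ (hY k) (hYp k) (hw k))
    n L
  have hscale : L + n * (2 * β ^ 2 * expRemainder (1 / β * (2 * 1)) * ((1 / β) ^ 2 * (4 * w))) =
      1 / β * (β * L + n * (8 * β * expRemainder (2 * (1 / β)) * w)) := by
    rw [mul_one, mul_comm (1 / β) 2]
    field_simp
    ring
  simpa only [hscale, mul_le_mul_iff_right₀ (one_div_pos.2 hβ), Pi.sub_apply] using tail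

theorem IsTwoSmooth.measureReal_lt_norm_sum_unitBallProj_sub_condExp_le (hB : IsTwoSmooth B β)
    (hp₁ : 1 < p) (hp₂ : p ≤ 2) (hw₀ : 0 ≤ w) {Y : ℕ → Ω → B}
    (hY_meas : ∀ k, StronglyMeasurable[ℱ (k + 1)] (Y k)) (hY : ∀ k, Integrable (Y k) P)
    (hYp : ∀ k, Integrable (fun ω => ‖Y k ω‖ ^ p) P)
    (hw : ∀ k, ∀ᵐ ω ∂P, (P[fun ω => ‖Y k ω‖ ^ p | ℱ k]) ω ≤ w) (n : ℕ) (L : ℝ) :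
    P.real {ω | β * L + n * ((8 * β * expRemainder (2 * (1 / β)) + Kp p) * w) <
      ‖∑ k ∈ Finset.range n, (unitBallProj (Y k ω) - (P[Y k | ℱ k]) ω)‖} ≤ 2 * Real.exp (-L) := by
  refine (measureReal_setOf_mono_of_ae ?_).trans
    (hB.measureReal_le_norm_sum_unitBallProj_sub_condExp_self_le (one_pos.trans hp₁).le hp₂ hw₀
      hY_meas hYp hw n L)
  filter_upwards [ae_all_iff.2 fun k =>
    ae_norm_condExp_unitBallProj_sub_condExp_le hp₁ (hY k) (hYp k) (hw k)] with ω hbias hω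
  set T : ℕ → Ω → B := fun k ω => unitBallProj (Y k ω)
  have hsplit : ‖∑ k ∈ Finset.range n, (T k ω - (P[Y k | ℱ k]) ω)‖ ≤
      ‖∑ k ∈ Finset.range n, (T k ω - (P[T k | ℱ k]) ω)‖ + n * (Kp p * w) :=
    calc _ = ‖∑ k ∈ Finset.range n, (T k ω - (P[T k | ℱ k]) ω) +
            ∑ k ∈ Finset.range n, ((P[T k | ℱ k]) ω - (P[Y k | ℱ k]) ω)‖ := by
          simp only [← Finset.sum_add_distrib, sub_add_sub_cancel]
      _ ≤ _ := norm_add_le_of_le le_rfl (by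
          simpa using norm_sum_le_of_le (Finset.range n) fun k _ => hbias k)
  linarith

theorem IsTwoSmooth.measureReal_lt_norm_truncated_mean_sub_le (hB : IsTwoSmooth B β) (hp₁ : 1 < p)
    (hp₂ : p ≤ 2) (hv₀ : 0 ≤ v) {X : ℕ → Ω → B}
    (hX_meas : ∀ k, StronglyMeasurable[ℱ (k + 1)] (X k)) (hX : ∀ k, Integrable (X k) P)
    (hXp : ∀ k, Integrable (fun ω => ‖X k ω‖ ^ p) P)
    (hv : ∀ k, ∀ᵐ ω ∂P, (P[fun ω => ‖X k ω‖ ^ p | ℱ k]) ω ≤ v) {lam : ℝ} (hlam : 0 < lam)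
    {n : ℕ} (hn : 0 < n) (L : ℝ) :
    P.real {ω | (β * L / n + (8 * β * expRemainder (2 * (1 / β)) + Kp p) * (lam ^ p * v)) / lam <
      ‖(n : ℝ)⁻¹ • ∑ k ∈ Finset.range n, truncB (lam • X k ω) • X k ω -
        (n : ℝ)⁻¹ • ∑ k ∈ Finset.range n, (P[X k | ℱ k]) ω‖} ≤ 2 * Real.exp (-L) := by
  have hn₀ : (0 : ℝ) < n := by exact_mod_cast hn
  have hpow (k : ℕ) : (fun ω => ‖(lam • X k) ω‖ ^ p) = lam ^ p • fun ω => ‖X k ω‖ ^ p := by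
    ext ω
    rw [Pi.smul_apply, norm_smul, Real.norm_of_nonneg hlam.le,
      Real.mul_rpow hlam.le (norm_nonneg _), Pi.smul_apply, smul_eq_mul]
  have tail := hB.measureReal_lt_norm_sum_unitBallProj_sub_condExp_le (ℱ := ℱ) (P := P) hp₁ hp₂
    (w := lam ^ p * v) (by positivity) (Y := fun k => lam • X k)
    (fun k => (hX_meas k).const_smul lam) (fun k => (hX k).smul lam)
    (fun k => by rw [hpow]; exact (hXp k).smul _)
    (fun k => by
      rw [hpow]
      filter_upwards [condExp_smul (lam ^ p) (fun ω => ‖X k ω‖ ^ p) (ℱ k), hv k] with ω hsmul hω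
      rw [hsmul, Pi.smul_apply, smul_eq_mul]
      gcongr) n L
  refine (measureReal_setOf_mono_of_ae ?_).trans tail
  filter_upwards [ae_all_iff.2 fun k => condExp_smul lam (X k) (ℱ k)] with ω hsmul hω
  have hfactor : ‖∑ k ∈ Finset.range n, (unitBallProj ((lam • X k) ω) -
      (P[lam • X k | ℱ k]) ω)‖ = n * (lam *
        ‖(n : ℝ)⁻¹ • ∑ k ∈ Finset.range n, truncB (lam • X k ω) • X k ω -
          (n : ℝ)⁻¹ • ∑ k ∈ Finset.range n, (P[X k | ℱ k]) ω‖) := by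
    have : 0 ≤ lam * n := by positivity
    simp only [hsmul, Pi.smul_apply, unitBallProj_smul, ← smul_sub, ← Finset.smul_sum,
      ← Finset.sum_sub_distrib]
    rw [← mul_assoc, mul_comm (n : ℝ), ← Real.norm_of_nonneg this, ← norm_smul, smul_smul,
      mul_inv_cancel_right₀ hn₀.ne']
  rw [div_lt_iff₀' hlam] at hω
  rw [hfactor]
  refine lt_of_eq_of_lt ?_ (mul_lt_mul_of_pos_left hω hn₀)
  field_simp

end TruncatedMean

theorem ofReal_one_sub_le_measure {Ω : Type*} {mΩ : MeasurableSpace Ω} {P : Measure Ω}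
    [IsProbabilityMeasure P] {s : Set Ω} {δ : ℝ} (hs : P.real sᶜ ≤ δ) :
    ENNReal.ofReal (1 - δ) ≤ P s := by
  have hcover : 1 ≤ P.real s + P.real sᶜ := by
    simpa using measureReal_union_le (μ := P) s sᶜ
  rw [← ofReal_measureReal]
  exact ENNReal.ofReal_le_ofReal (by linarith)

theorem stmt16_general
    {B : Type*} [NormedAddCommGroup B] [NormedSpace ℝ B] [CompleteSpace B]
    {Ω : Type*} {mΩ : MeasurableSpace Ω} {P : Measure Ω} [IsProbabilityMeasure P]
    {β : ℝ} (hB : IsTwoSmooth B β) (ℱ : Filtration ℕ mΩ) (X M : ℕ → Ω → B) {p v : ℝ}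
    (hp₁ : 1 < p) (hp₂ : p ≤ 2) (hv : 0 < v)
    (hadapted : ∀ n : ℕ, 1 ≤ n → StronglyMeasurable[ℱ n] (X n))
    (hint : ∀ n : ℕ, 1 ≤ n → Integrable (X n) P)
    (hmom : ∀ n : ℕ, 1 ≤ n → Integrable (fun ω => ‖X n ω‖ ^ p) P)
    (hcondmean : ∀ n : ℕ, P[X (n + 1) | ℱ n] =ᵐ[P] M n)
    (hcondmom : ∀ n : ℕ, ∀ᵐ ω ∂P, (P[fun ω' => ‖X (n + 1) ω'‖ ^ p | ℱ n]) ω ≤ v)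
    {δ : ℝ} (hδ : δ ∈ Set.Ioc (0 : ℝ) 1) {N : ℕ} (hN : 1 ≤ N) {lam : ℝ}
    (hlam : lam = (Real.log (2 / δ) * β /
      (2 * (N : ℝ) * v * (β * frakC p (1 / β) + Kp p * 2 ^ (p - 1)))) ^ (1 / p)) :
    ENNReal.ofReal (1 - δ) ≤
      P {ω |
        ‖(N : ℝ)⁻¹ • (∑ m ∈ Finset.range N, truncB (lam • X (m + 1) ω) • X (m + 1) ω) -
            (N : ℝ)⁻¹ • ∑ m ∈ Finset.range N, M m ω‖ ≤
          2 * (2 * v * (β * frakC p (1 / β) + Kp p * 2 ^ (p - 1))) ^ (1 / p) *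
            (β * Real.log (2 / δ) / (N : ℝ)) ^ ((p - 1) / p)} := by
  have hN₀ : (0 : ℝ) < N := by exact_mod_cast hN
  have hL : 0 < Real.log (2 / δ) := Real.log_pos ((one_lt_div hδ.1).2 (by linarith [hδ.2]))
  have hexp : 2 * Real.exp (-Real.log (2 / δ)) = δ := by
    rw [← Real.log_inv, Real.exp_log (inv_pos.2 (div_pos two_pos hδ.1)), inv_div,
      mul_div_cancel₀ _ two_ne_zero]
  obtain ⟨hlam₀, hradius⟩ :=
    optimal_truncation_level (one_pos.trans_le hB.one_le) hp₁ hv hL hN₀ hlam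
  have tail := hB.measureReal_lt_norm_truncated_mean_sub_le hp₁ hp₂ hv.le
    (X := fun k => X (k + 1)) (fun k => hadapted _ k.succ_pos) (fun k => hint _ k.succ_pos)
    (fun k => hmom _ k.succ_pos) hcondmom hlam₀ hN (Real.log (2 / δ))
  refine ofReal_one_sub_le_measure ((measureReal_setOf_mono_of_ae ?_).trans (tail.trans_eq hexp))
  filter_upwards [ae_all_iff.2 hcondmean] with ω hmean hω
  simp only [← hmean] at hω
  exact hradius.trans_lt (not_le.1 hω)

/-- **Optimized bound under a raw (uncentered) `p`-th moment bound.** With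
`λ = (log(2/δ)β/(2Nv(β𝔠_p + K_p2^{p-1})))^{1/p}`, with probability at least `1 - δ`,
`‖μ̂_N - μ‖ ≤ 2(2v(β𝔠_p + K_p2^{p-1}))^{1/p}(β log(2/δ)/N)^{(p-1)/p}`. -/
theorem stmt16
    {B : Type*} [NormedAddCommGroup B] [NormedSpace ℝ B] [CompleteSpace B]
    [TopologicalSpace.SeparableSpace B]
    {Ω : Type*} {mΩ : MeasurableSpace Ω} {P : Measure Ω} [IsProbabilityMeasure P]
    (β : ℝ) (hβ : 1 ≤ β)
    (hsmooth : ∀ x y : B, ‖x + y‖ ^ 2 + ‖x - y‖ ^ 2 ≤ 2 * ‖x‖ ^ 2 + 2 * β ^ 2 * ‖y‖ ^ 2)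
    (ℱ : Filtration ℕ mΩ) (X : ℕ → Ω → B) (μ : B) (p v : ℝ)
    (hp1 : 1 < p) (hp2 : p ≤ 2) (hv : 0 < v)
    (hadapted : ∀ n : ℕ, 1 ≤ n → StronglyMeasurable[ℱ n] (X n))
    (hint : ∀ n : ℕ, 1 ≤ n → Integrable (X n) P)
    (hmom : ∀ n : ℕ, 1 ≤ n → Integrable (fun ω => ‖X n ω‖ ^ p) P)
    (hcondmean : ∀ n : ℕ, P[X (n + 1) | ℱ n] =ᵐ[P] fun _ => μ)
    (hcondmom : ∀ n : ℕ, ∀ᵐ ω ∂P, (P[fun ω' => ‖X (n + 1) ω'‖ ^ p | ℱ n]) ω ≤ v)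
    (δ : ℝ) (hδ : δ ∈ Set.Ioc (0 : ℝ) 1) (N : ℕ) (hN : 1 ≤ N) (lam : ℝ)
    (hlam : lam = (Real.log (2 / δ) * β /
      (2 * (N : ℝ) * v * (β * frakC p (1 / β) + Kp p * 2 ^ (p - 1)))) ^ (1 / p)) :
    ENNReal.ofReal (1 - δ) ≤
      P {ω |
        ‖(N : ℝ)⁻¹ • (∑ m ∈ Finset.range N, truncB (lam • X (m + 1) ω) • X (m + 1) ω) - μ‖ ≤
          2 * (2 * v * (β * frakC p (1 / β) + Kp p * 2 ^ (p - 1))) ^ (1 / p) *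
            (β * Real.log (2 / δ) / (N : ℝ)) ^ ((p - 1) / p)} := by
  simpa [Finset.sum_const, ← Nat.cast_smul_eq_nsmul ℝ, smul_smul, Nat.one_le_iff_ne_zero.1 hN] using
    stmt16_general ⟨hβ, hsmooth⟩ ℱ X (fun _ _ => μ) hp1 hp2 hv hadapted hint hmom hcondmean hcondmom
      hδ hN hlam
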